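/- Let X be a measurable space equipped with a probability measure μ, let ν be the product probability measure on Y = (ℤ → X), and let d ≥ 1 be a natural number. Then the diagonal shift map on Fin d → Y, sending (y₁,…,y_d) to (T y₁,…,T y_d) where (T y)(n) = y(n + 1), is measure-preserving and ergodic with respect to the product measure ν^d on Fin d → Y. -/

import Mathlib

open MeasureTheory

/-!
An invariant set `s` is approximated by a cylinder `t`, which depends on finitely many coordinates
only. The shift reindexes the coordinates by a map without periodic points, so some iterate `g` of
it moves all these coordinates off themselves and makes `g ⁻¹' t` independent of `t`. As
`t ∩ g ⁻¹' t` still approximates `s = s ∩ g ⁻¹' s`, the measure of `s` equals its square. Uncurrying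
turns the diagonal action on `ι → κ → X` into a single reindexing of `ι × κ → X`, again without
periodic points.
-/

section

open Function ProbabilityTheory
open scoped symmDiff

section Independence

variable {Ω : Type*} {mΩ : MeasurableSpace Ω} {μ : Measure Ω} {f : Ω → Ω} {s t : Set Ω}

lemma abs_measureReal_inter_preimage_sub_le [IsFiniteMeasure μ] (hf : MeasurePreserving f μ μ)
    (hs : NullMeasurableSet s μ) (ht : NullMeasurableSet t μ) (hfs : f ⁻¹' s = s) :
    |μ.real (t ∩ f ⁻¹' t) - μ.real s| ≤ 2 * μ.real (t ∆ s) := by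
  have hsub : (t ∩ f ⁻¹' t) ∆ s ⊆ t ∆ s ∪ f ⁻¹' (t ∆ s) := by
    rw [Set.preimage_symmDiff, hfs]
    grind
  have hpre : μ.real (f ⁻¹' (t ∆ s)) = μ.real (t ∆ s) :=
    congrArg ENNReal.toReal (hf.measure_preimage (ht.symmDiff hs))
  calc |μ.real (t ∩ f ⁻¹' t) - μ.real s|
      ≤ μ.real ((t ∩ f ⁻¹' t) ∆ s) := abs_measureReal_sub_le_measureReal_symmDiff
        (ht.inter (ht.preimage hf.quasiMeasurePreserving)) hs
    _ ≤ μ.real (t ∆ s ∪ f ⁻¹' (t ∆ s)) := measureReal_mono hsub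
    _ ≤ μ.real (t ∆ s) + μ.real (f ⁻¹' (t ∆ s)) := measureReal_union_le _ _
    _ = 2 * μ.real (t ∆ s) := by rw [hpre, two_mul]

lemma abs_measureReal_sub_sq_le_of_indepSet [IsProbabilityMeasure μ]
    (hf : MeasurePreserving f μ μ) (hs : NullMeasurableSet s μ) (ht : NullMeasurableSet t μ)
    (hfs : f ⁻¹' s = s) (hind : IndepSet t (f ⁻¹' t) μ) :
    |μ.real s - μ.real s ^ 2| ≤ 4 * μ.real (t ∆ s) := by
  have hsq : μ.real (t ∩ f ⁻¹' t) = μ.real t ^ 2 := by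
    simp only [measureReal_def, hind.measure_inter_eq_mul,
      hf.measure_preimage ht, ENNReal.toReal_mul, sq]
  have hinter := abs_measureReal_inter_preimage_sub_le hf hs ht hfs
  have hdiff := abs_measureReal_sub_le_measureReal_symmDiff ht hs
  have hsum : |μ.real t + μ.real s| ≤ 2 := by
    rw [abs_of_nonneg (by positivity)]
    linarith [measureReal_le_one (μ := μ) (s := s), measureReal_le_one (μ := μ) (s := t)]
  calc |μ.real s - μ.real s ^ 2|
      ≤ |μ.real s - μ.real t ^ 2| + |μ.real t ^ 2 - μ.real s ^ 2| := abs_sub_le _ _ _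
    _ = |μ.real (t ∩ f ⁻¹' t) - μ.real s| + |μ.real t + μ.real s| * |μ.real t - μ.real s| := by
        rw [hsq, abs_sub_comm, sq_sub_sq, abs_mul]
    _ ≤ 2 * μ.real (t ∆ s) + 2 * μ.real (t ∆ s) := by gcongr
    _ = 4 * μ.real (t ∆ s) := by ring

theorem ergodic_of_forall_mem_exists_indepSet [IsProbabilityMeasure μ]
    (hf : MeasurePreserving f μ μ) {C : Set (Set Ω)} (hC : IsSetRing C)
    (hcover : ∃ D : Set (Set Ω), D.Countable ∧ D ⊆ C ∧ μ (⋃₀ D)ᶜ = 0)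
    (hgen : mΩ = MeasurableSpace.generateFrom C)
    (hind : ∀ t ∈ C, ∃ n : ℕ, IndepSet t (f^[n] ⁻¹' t) μ) :
    Ergodic f μ := by
  refine ⟨hf, ⟨fun s hs hfs => ?_⟩⟩
  have hsq : μ.real s = μ.real s ^ 2 := by
    refine eq_of_forall_dist_le fun ε hε => ?_
    obtain ⟨t, htC, hts⟩ := exists_measure_symmDiff_lt_of_generateFrom_isSetRing hC hcover hgen hs
      (ENNReal.ofReal_pos.2 (show 0 < ε / 4 by positivity))
    have ht : MeasurableSet t := hgen ▸ MeasurableSpace.measurableSet_generateFrom htC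
    obtain ⟨n, hn⟩ := hind t htC
    have hbound := abs_measureReal_sub_sq_le_of_indepSet (hf.iterate n) hs.nullMeasurableSet
      ht.nullMeasurableSet (IsFixedPt.preimage_iterate hfs n) hn
    have happrox : μ.real (t ∆ s) ≤ ε / 4 :=
      ENNReal.toReal_le_of_le_ofReal (by positivity) hts.le
    rw [Real.dist_eq]
    linarith
  have hself : μ.real s = 0 ∨ μ.real s = 1 := by
    rw [← IsIdempotentElem.iff_eq_zero_or_one, IsIdempotentElem, ← sq, ← hsq]
  rw [Filter.eventuallyConst_set', ae_eq_empty, ae_eq_univ, prob_compl_eq_zero_iff hs]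
  simpa [measureReal_def, ENNReal.toReal_eq_one_iff, ENNReal.toReal_eq_zero_iff] using hself

end Independence

section Aperiodic

variable {α β : Type*}

lemma injOn_iterate_notMem_periodicPts (f : α → α) (x : α) :
    Set.InjOn (fun n => f^[n] x) {n | f^[n] x ∉ periodicPts f} := by
  intro m hm n hn heq
  wlog hmn : m < n generalizing m n
  · grind
  have hreturn : IsPeriodicPt f (n - m) (f^[m] x) := by
    rw [IsPeriodicPt, IsFixedPt, ← iterate_add_apply, Nat.sub_add_cancel hmn.le]
    exact heq.symm
  exact absurd (mk_mem_periodicPts (Nat.sub_pos_of_lt hmn) hreturn) hm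

lemma exists_forall_mem_iterate_notMem {f : α → α} {I : Set α} (hI : I.Finite)
    (hf : Disjoint I (periodicPts f)) : ∃ n : ℕ, ∀ x ∈ I, f^[n] x ∉ I := by
  have hvisits (x : α) : ((fun n => f^[n] x) ⁻¹' I).Finite :=
    hI.preimage ((injOn_iterate_notMem_periodicPts f x).mono fun _ hn => hf.notMem_of_mem_left hn)
  obtain ⟨n, hn⟩ := (hI.biUnion fun x _ => hvisits x).exists_notMem
  exact ⟨n, by simpa using hn⟩

lemma periodicPts_prodMap_eq_empty (f : α → α) {g : β → β} (hg : periodicPts g = ∅) :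
    periodicPts (Prod.map f g) = ∅ := by
  refine Set.eq_empty_of_forall_notMem fun p hp => ?_
  have hsemi : Semiconj Prod.snd (Prod.map f g) g := fun _ => rfl
  simpa [hg] using hsemi.mapsTo_periodicPts hp

lemma periodicPts_add_right_eq_empty {G : Type*} [AddLeftCancelMonoid G] {a : G}
    (ha : ¬IsOfFinAddOrder a) : periodicPts (· + a) = ∅ := by
  refine Set.eq_empty_of_forall_notMem fun k hk => ha ?_
  obtain ⟨n, hn, hfix⟩ := mem_periodicPts.1 hk
  rw [IsPeriodicPt, IsFixedPt, add_right_iterate, add_eq_left] at hfix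
  exact isOfFinAddOrder_iff_nsmul_eq_zero.2 ⟨n, hn, hfix⟩

end Aperiodic

section Reindexing

variable {κ X : Type*} {σ : κ → κ}

lemma iterate_comp_right (σ : κ → κ) (n : ℕ) :
    (fun y : κ → X => y ∘ σ)^[n] = fun y => y ∘ σ^[n] := by
  induction n with
  | zero => rfl
  | succ n ih => rw [iterate_succ', ih, iterate_succ]; rfl

variable [MeasurableSpace X] {P : κ → Measure X} [∀ k, IsProbabilityMeasure (P k)]

lemma measurePreserving_comp_right_infinitePi (hσ : Injective σ) (hP : ∀ k, P (σ k) = P k) :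
    MeasurePreserving (fun y : κ → X => y ∘ σ) (Measure.infinitePi P) (Measure.infinitePi P) where
  measurable := by fun_prop
  map_eq := by
    have hmap := Measure.map_infinitePi_infinitePi_of_inj (P := P) hσ
    simp only [hP] at hmap
    exact hmap

lemma indepFun_restrict_restrict_comp {I : Finset κ} (hσ : ∀ k ∈ I, σ k ∉ I) :
    IndepFun I.restrict (fun y : κ → X => I.restrict (y ∘ σ)) (Measure.infinitePi P) := by
  classical
  have hdisj : Disjoint I (I.image σ) := by
    grind [Finset.disjoint_left]
  have hcoord : iIndepFun (fun k (y : κ → X) => y k) (Measure.infinitePi P) :=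
    iIndepFun_infinitePi (X := fun _ => id) fun _ => measurable_id
  exact (hcoord.indepFun_finset I (I.image σ) hdisj fun k => by fun_prop).comp
    (φ := id) (ψ := fun z (k : I) => z ⟨σ k, Finset.mem_image_of_mem σ k.2⟩)
    measurable_id (by fun_prop)

theorem ergodic_comp_right_infinitePi (hσ : Injective σ) (hper : periodicPts σ = ∅)
    (hP : ∀ k, P (σ k) = P k) :
    Ergodic (fun y : κ → X => y ∘ σ) (Measure.infinitePi P) := by
  refine ergodic_of_forall_mem_exists_indepSet (measurePreserving_comp_right_infinitePi hσ hP)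
    isSetRing_measurableCylinders
    ⟨{Set.univ}, Set.countable_singleton _,
      Set.singleton_subset_iff.2 (univ_mem_measurableCylinders _), by simp⟩
    generateFrom_measurableCylinders.symm fun t ht => ?_
  obtain ⟨I, S, hS, rfl⟩ := (mem_measurableCylinders t).1 ht
  obtain ⟨n, hn⟩ := exists_forall_mem_iterate_notMem (f := σ) I.finite_toSet (by simp [hper])
  refine ⟨n, ?_⟩
  rw [iterate_comp_right]
  exact (indepFun_iff_indepSet_preimage (by fun_prop) (by fun_prop)).1
    (indepFun_restrict_restrict_comp hn) S S hS hS

end Reindexing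

theorem diagonal_bernoulli_shift_ergodic_general {ι κ X : Type*} [MeasurableSpace X]
    (μ : ι → Measure X) [∀ i, IsProbabilityMeasure (μ i)] {σ : κ → κ} (hσ : Injective σ)
    (hper : periodicPts σ = ∅) :
    Ergodic (fun (y : ι → κ → X) i k => y i (σ k))
      (Measure.infinitePi fun i => Measure.infinitePi fun _ : κ => μ i) := by
  have hcurry : MeasurePreserving (MeasurableEquiv.curry ι κ X)
      (Measure.infinitePi fun p : ι × κ => μ p.1)
      (Measure.infinitePi fun i => Measure.infinitePi fun _ : κ => μ i) :=
    ⟨MeasurableEquiv.measurable _, Measure.infinitePi_map_curry fun i _ => μ i⟩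
  have hprod := ergodic_comp_right_infinitePi (P := fun p : ι × κ => μ p.1)
    (injective_id.prodMap hσ) (periodicPts_prodMap_eq_empty id hper) fun _ => rfl
  exact hcurry.ergodic_of_ergodic_semiconj hprod (by fun_prop) fun _ => rfl

end

/-- For every `d ≥ 1`, the diagonal Bernoulli shift on `d` copies of
the product space `Y = (ℤ → X)`, equipped with the `d`-fold product of the Bernoulli
measure `ν` (itself characterised by its values on cylinder sets), is
measure-preserving and ergodic. -/
theorem diagonal_bernoulli_shift_ergodic
    {X : Type*} [MeasurableSpace X] (μ : Measure X) [IsProbabilityMeasure μ]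
    (ν : Measure (ℤ → X)) [IsProbabilityMeasure ν]
    (hν : ∀ (s : Finset ℤ) (t : ℤ → Set X), (∀ i ∈ s, MeasurableSet (t i)) →
      ν {y | ∀ i ∈ s, y i ∈ t i} = ∏ i ∈ s, μ (t i))
    (d : ℕ) (hd : 1 ≤ d) :
    MeasurePreserving (fun (y : Fin d → ℤ → X) (i : Fin d) (n : ℤ) => y i (n + 1))
      (Measure.pi fun _ : Fin d => ν) (Measure.pi fun _ : Fin d => ν) ∧
    Ergodic (fun (y : Fin d → ℤ → X) (i : Fin d) (n : ℤ) => y i (n + 1))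
      (Measure.pi fun _ : Fin d => ν) := by
  obtain rfl : ν = Measure.infinitePi fun _ : ℤ => μ :=
    Measure.eq_infinitePi _ fun s t ht => hν s t fun i _ => ht i
  have hper : Function.periodicPts (fun n : ℤ => n + 1) = ∅ :=
    periodicPts_add_right_eq_empty (not_isOfFinAddOrder_of_isAddTorsionFree one_ne_zero)
  have herg := diagonal_bernoulli_shift_ergodic_general (fun _ : Fin d => μ)
    (add_left_injective (1 : ℤ)) hper
  rw [Measure.infinitePi_eq_pi] at herg
  exact ⟨herg.toMeasurePreserving, herg⟩
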